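/- Let q ∈ ℝ with |q| > 1 and n ≥ 1, and let Ψ₊, Ψ₋ : F → B(ℓ²(ℕⁿ)) be the *-homomorphisms of the representations ψ^{(2n)}_± of the quantum sphere S^{2n}_q. Let p := 2^{n−1}·1 + (1/2)(q⁻¹ − 1)ⁿ x₀ ∈ F be the matrix trace of the idempotent e_{(2n)} = (1 + u_{(2n)})/2. Then Ψ₊(p) − Ψ₋(p) is trace class and Tr[Ψ₊(p) − Ψ₋(p)] = (−1)ⁿ. (This is the pairing ⟨μ_ev, e_{(2n)}⟩ of the even Fredholm module with the K-theory class of e_{(2n)}.) -/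

import Mathlib

/-- The standard orthonormal basis vector of `ℓ²(ℕⁿ)` at `k`. -/
noncomputable def eVec (n : ℕ) (k : Fin n → ℕ) : lp (fun _ : Fin n → ℕ => ℂ) 2 :=
  lp.single 2 k 1

/-- A bounded operator on `ℓ²(ℕⁿ)` is Hilbert–Schmidt if the squared norms of the images
of the standard basis vectors are summable. -/
def IsHilbertSchmidt {n : ℕ}
    (T : lp (fun _ : Fin n → ℕ => ℂ) 2 →L[ℂ] lp (fun _ : Fin n → ℕ => ℂ) 2) : Prop :=
  Summable fun k : Fin n → ℕ => ‖T (eVec n k)‖ ^ 2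

/-- A bounded operator is trace class iff it is a product of two Hilbert–Schmidt
operators. -/
def IsTraceClass {n : ℕ}
    (T : lp (fun _ : Fin n → ℕ => ℂ) 2 →L[ℂ] lp (fun _ : Fin n → ℕ => ℂ) 2) : Prop :=
  ∃ A B, IsHilbertSchmidt A ∧ IsHilbertSchmidt B ∧ T = A * B

/-- A diagonal operator with entries bounded by one. -/
theorem exists_diag (n : ℕ) (d : (Fin n → ℕ) → ℂ) (hd : ∀ k, ‖d k‖ ≤ 1) :
    ∃ D : lp (fun _ : Fin n → ℕ => ℂ) 2 →L[ℂ] lp (fun _ : Fin n → ℕ => ℂ) 2,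
      ∀ k, D (eVec n k) = d k • eVec n k := by
  have hle : ∀ (f : lp (fun _ : Fin n → ℕ => ℂ) 2) k, ‖d k * f k‖ ≤ ‖f k‖ := by
    intro f k
    rw [norm_mul]
    exact mul_le_of_le_one_left (norm_nonneg _) (hd k)
  let L : lp (fun _ : Fin n → ℕ => ℂ) 2 →ₗ[ℂ] lp (fun _ : Fin n → ℕ => ℂ) 2 :=
    { toFun := fun f => ⟨fun k => d k * f k, Memℓp.mono' (lp.memℓp f) (hle f)⟩
      map_add' := by
        intro f g
        apply lp.ext
        funext k
        exact mul_add (d k) (f k) (g k)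
      map_smul' := by
        intro c f
        apply lp.ext
        funext k
        exact mul_left_comm (d k) c (f k) }
  refine ⟨L.mkContinuous 1 ?_, ?_⟩
  · intro f
    rw [one_mul]
    exact lp.norm_mono (by simp) (hle f)
  · intro k
    apply lp.ext
    funext j
    change d j * (eVec n k) j = d k * (eVec n k) j
    by_cases h : j = k
    · rw [h]
    · rw [eVec, lp.single_apply_ne _ _ _ h, mul_zero, mul_zero]

theorem geom_multi {r : ℂ} (hr : ‖r‖ < 1) (n : ℕ) :
    (Summable fun k : Fin n → ℕ => ‖r ^ (∑ j, k j)‖) ∧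
    HasSum (fun k : Fin n → ℕ => r ^ (∑ j, k j)) (((1 - r)⁻¹) ^ n) := by
  induction n with
  | zero =>
    refine ⟨(hasSum_fintype _).summable, ?_⟩
    have h := hasSum_fintype (fun k : Fin 0 → ℕ => r ^ (∑ j, k j))
    simpa using h
  | succ n ih =>
    have h1 : Summable fun m : ℕ => ‖r ^ m‖ := by
      simpa using summable_geometric_of_lt_one (norm_nonneg r) hr
    have h2 : HasSum (fun m : ℕ => r ^ m) ((1 - r)⁻¹) := hasSum_geometric_of_norm_lt_one hr
    have e : ∀ x : ℕ × (Fin n → ℕ),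
        r ^ (∑ j, (Fin.consEquiv (fun _ => ℕ) x) j) = r ^ x.1 * r ^ (∑ j, x.2 j) := by
      intro x
      rw [← pow_add, Fin.sum_univ_succ]
      simp [Fin.consEquiv]
    constructor
    · rw [← (Fin.consEquiv (fun _ : Fin (n+1) => ℕ)).summable_iff]
      refine (Summable.mul_norm h1 ih.1).congr ?_
      intro x
      exact (congrArg norm (e x)).symm
    · rw [← (Fin.consEquiv (fun _ : Fin (n+1) => ℕ)).hasSum_iff, pow_succ']
      have hs : Summable fun x : ℕ × (Fin n → ℕ) => r ^ x.1 * r ^ (∑ j, x.2 j) :=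
        summable_mul_of_summable_norm (f := fun m : ℕ => r ^ m)
          (g := fun k : Fin n → ℕ => r ^ (∑ j, k j)) h1 ih.1
      have h3 := HasSum.mul (f := fun m : ℕ => r ^ m)
          (g := fun k : Fin n → ℕ => r ^ (∑ j, k j)) h2 ih.2 hs
      have h4 : ((fun k : Fin (n+1) → ℕ => r ^ (∑ j, k j)) ∘ (Fin.consEquiv fun _ => ℕ))
          = fun x : ℕ × (Fin n → ℕ) => r ^ x.1 * r ^ (∑ j, x.2 j) := funext e
      rw [h4]
      exact h3

/-- Pairing of the even Fredholm module with the idempotent `e_{(2n)}`:  for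
`p = 2^{n-1}·1 + ½(q⁻¹-1)ⁿ x₀` (the matrix trace of `e_{(2n)}`), the operator
`ψ₊(p) - ψ₋(p)` is trace class with trace `(-1)ⁿ`. -/
theorem even_pairing (q : ℝ) (hq : 1 < |q|) (n : ℕ) (hn : 1 ≤ n)
    (X0p X0m : lp (fun _ : Fin n → ℕ => ℂ) 2 →L[ℂ] lp (fun _ : Fin n → ℕ => ℂ) 2)
    (hX0p : ∀ k : Fin n → ℕ,
      X0p (eVec n k) = (((q ^ (∑ j, k j))⁻¹ : ℝ) : ℂ) • eVec n k)
    (hX0m : ∀ k : Fin n → ℕ,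
      X0m (eVec n k) = ((-(q ^ (∑ j, k j))⁻¹ : ℝ) : ℂ) • eVec n k) :
    ∀ Pp Pm : lp (fun _ : Fin n → ℕ => ℂ) 2 →L[ℂ] lp (fun _ : Fin n → ℕ => ℂ) 2,
      Pp = ((2 : ℂ) ^ (n - 1)) • 1 + ((((q : ℂ)⁻¹ - 1) ^ n) / 2) • X0p →
      Pm = ((2 : ℂ) ^ (n - 1)) • 1 + ((((q : ℂ)⁻¹ - 1) ^ n) / 2) • X0m →
      IsTraceClass (Pp - Pm) ∧
      (Summable fun k : Fin n → ℕ => (inner ℂ (eVec n k) ((Pp - Pm) (eVec n k)) : ℂ)) ∧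
      ∑' k : Fin n → ℕ, (inner ℂ (eVec n k) ((Pp - Pm) (eVec n k)) : ℂ) = (-1) ^ n := by
  intro Pp Pm hPp hPm
  have hq0 : q ≠ 0 := by
    rintro rfl
    simp at hq
    linarith
  have hr : ‖(q : ℂ)⁻¹‖ < 1 := by
    rw [norm_inv, Complex.norm_real, Real.norm_eq_abs]
    exact inv_lt_one_of_one_lt₀ hq
  set r : ℂ := (q : ℂ)⁻¹ with hrdef
  have hr1 : 1 - r ≠ 0 := by
    intro h
    rw [← sub_eq_zero.mp h] at hr
    simp at hr
  obtain ⟨hS, hH⟩ := geom_multi hr n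
  have hT : ∀ k, (Pp - Pm) (eVec n k) = ((r - 1) ^ n * r ^ (∑ j, k j)) • eVec n k := by
    intro k
    rw [hPp, hPm]
    simp only [ContinuousLinearMap.sub_apply, ContinuousLinearMap.add_apply,
      ContinuousLinearMap.smul_apply, hX0p, hX0m, smul_smul, add_sub_add_left_eq_sub]
    rw [← sub_smul]
    congr 1
    push_cast
    rw [hrdef, inv_pow]
    ring
  have hnorm : ∀ k, ‖eVec n k‖ = 1 := by
    intro k
    rw [eVec, lp.norm_single (by simp)]
    simp
  have hI : ∀ k, (inner ℂ (eVec n k) ((Pp - Pm) (eVec n k)) : ℂ)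
      = (r - 1) ^ n * r ^ (∑ j, k j) := by
    intro k
    rw [hT, inner_smul_right, inner_self_eq_norm_sq_to_K, hnorm]
    simp
  have hsum : HasSum (fun k : Fin n → ℕ => (inner ℂ (eVec n k) ((Pp - Pm) (eVec n k)) : ℂ))
      ((-1) ^ n) := by
    simp_rw [hI]
    have := hH.mul_left ((r - 1) ^ n)
    rw [← mul_pow] at this
    have e : (r - 1) * (1 - r)⁻¹ = -1 := by
      field_simp
      ring
    rwa [e] at this
  refine ⟨?_, hsum.summable, hsum.tsum_eq⟩
  obtain ⟨w, hw⟩ := IsAlgClosed.exists_pow_nat_eq r (n := 2) (by norm_num)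
  have hw1 : ‖w‖ ≤ 1 := by
    have : ‖w‖ ^ 2 < 1 := by rw [← norm_pow, hw]; exact hr
    nlinarith [norm_nonneg w]
  obtain ⟨D, hD⟩ := exists_diag n (fun k => w ^ (∑ j, k j)) (by
    intro k
    rw [norm_pow]
    exact pow_le_one₀ (norm_nonneg _) hw1)
  have hDn : ∀ k, ‖D (eVec n k)‖ ^ 2 = ‖r ^ (∑ j, k j)‖ := by
    intro k
    rw [hD, norm_smul, hnorm, mul_one, ← norm_pow, ← pow_mul, mul_comm, pow_mul, hw]
  refine ⟨D, ((r - 1) ^ n) • D, ?_, ?_, ?_⟩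
  · exact hS.congr fun k => (hDn k).symm
  · refine (hS.mul_left (‖(r - 1) ^ n‖ ^ 2)).congr fun k => ?_
    rw [ContinuousLinearMap.smul_apply, norm_smul, mul_pow, hDn]
  · apply lp.ext_continuousLinearMap (by simp)
    intro k
    ext
    have : (Pp - Pm) (eVec n k) = (D * (((r - 1) ^ n) • D)) (eVec n k) := by
      change _ = D ((((r - 1) ^ n) • D) (eVec n k))
      rw [hT, ContinuousLinearMap.smul_apply, hD, map_smul,
        map_smul, hD, smul_smul, smul_smul]
      congr 1
      rw [← hw, ← pow_mul]
      ring
    exact congrFun (congrArg _ this) _
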